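/- arXiv:2605.07523 — 8 statements merged into one kernel-verified Lean document; each statement's English description precedes it below -/
import Mathlib

section
/- Let F be a finite family of axis-aligned rectangles in ℝ². A point p' ∈ ℝ² belongs to the inner Pareto front IPF(F) if and only if p' is dominated by the bottom-left corner of some region of F. In other words, for rectangles the inner Pareto front corresponds exactly to the open area strictly below the staircase of the Pareto front of the bottom-left corners. -/
/-- An axis-aligned rectangle `[x₁,x₂] × [y₁,y₂]` with `x₁ ≤ x₂` and `y₁ ≤ y₂`. -/
structure Rect where
  x1 : ℝ
  x2 : ℝ
  y1 : ℝ
  y2 : ℝ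
  hx : x1 ≤ x2
  hy : y1 ≤ y2

/-- The set of points of a rectangle. -/
def Rect.toSet (R : Rect) : Set (ℝ × ℝ) := Set.Icc R.x1 R.x2 ×ˢ Set.Icc R.y1 R.y2

/-- The top-right corner of a rectangle. -/
def Rect.tr (R : Rect) : ℝ × ℝ := (R.x2, R.y2)

/-- The bottom-left corner of a rectangle. -/
def Rect.bl (R : Rect) : ℝ × ℝ := (R.x1, R.y1)

/-- A rectangle is a point region if it is degenerate in both coordinates. -/
def Rect.isPoint (R : Rect) : Prop := R.x1 = R.x2 ∧ R.y1 = R.y2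

/-- The top facet `[x₁,x₂] × {y₂}` of a rectangle. -/
def Rect.topFacet (R : Rect) : Set (ℝ × ℝ) := Set.Icc R.x1 R.x2 ×ˢ ({R.y2} : Set ℝ)

/-- The right facet `{x₂} × [y₁,y₂]` of a rectangle. -/
def Rect.rightFacet (R : Rect) : Set (ℝ × ℝ) := ({R.x2} : Set ℝ) ×ˢ Set.Icc R.y1 R.y2

/-- `p` dominates `q` if `p` lies in the open top-right quadrant of `q`. -/
def dom (p q : ℝ × ℝ) : Prop := q.1 < p.1 ∧ q.2 < p.2

/-- `p` dominates a rectangle `R` if it dominates every point of `R`. -/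
def domR (p : ℝ × ℝ) (R : Rect) : Prop := ∀ q ∈ R.toSet, dom p q

/-- `P` is a realization of the family `F`. -/
def IsRealization {n : ℕ} (F : Fin n → Rect) (P : Fin n → ℝ × ℝ) : Prop :=
  ∀ i, P i ∈ (F i).toSet

/-- The outer Pareto front: indices `a` such that some point of `R_a` is dominated by no
point of any other region. -/
def OPF {n : ℕ} (F : Fin n → Rect) : Set (Fin n) :=
  {a | ∃ p ∈ (F a).toSet, ∀ b, b ≠ a → ∀ q ∈ (F b).toSet, ¬ dom q p}

/-- The inner Pareto front: points dominated in every realization of `F`. -/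
def IPF {n : ℕ} (F : Fin n → Rect) : Set (ℝ × ℝ) :=
  {p' | ∀ P : Fin n → ℝ × ℝ, IsRealization F P → ∃ i, dom (P i) p'}

/-- The degenerate rectangle consisting of a single point. -/
def pointRect (p : ℝ × ℝ) : Rect := ⟨p.1, p.1, p.2, p.2, le_rfl, le_rfl⟩

open Classical in
/-- The family `F ⊙ A`: regions with index in `A` are retrieved, i.e. replaced by
the point region of the corresponding point of the realization `P`. -/
noncomputable def retrieve {n : ℕ} (F : Fin n → Rect) (P : Fin n → ℝ × ℝ)
    (A : Set (Fin n)) : Fin n → Rect :=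
  fun i => if i ∈ A then pointRect (P i) else F i

/-- `q` witnesses an outgoing dependency of `R_a` to `R_b`:
`q ∈ R_b`, (I) the top-right corner of `R_b` does not dominate `R_a`,
(II) `q ∉ IPF F`, and (III) `q ∈ R_a` or the top-right corner of `R_a` dominates `q`. -/
def depWitness {n : ℕ} (F : Fin n → Rect) (a b : Fin n) (q : ℝ × ℝ) : Prop :=
  q ∈ (F b).toSet ∧ ¬ domR (F b).tr (F a) ∧ q ∉ IPF F ∧
    (q ∈ (F a).toSet ∨ dom (F a).tr q)

/-- `R_a` has an outgoing dependency in `F` to `R_b`. -/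
def outDep {n : ℕ} (F : Fin n → Rect) (a b : Fin n) : Prop :=
  a ≠ b ∧ ∃ q, depWitness F a b q

/-- `R_a` is independent in `F` if it has no outgoing dependency to any region. -/
def indep {n : ℕ} (F : Fin n → Rect) (a : Fin n) : Prop := ∀ b, ¬ outDep F a b

/-- The outer Pareto front of the subfamily of `F` with indices in `S`. -/
def OPFon {n : ℕ} (F : Fin n → Rect) (S : Set (Fin n)) : Set (Fin n) :=
  {a | a ∈ S ∧ ∃ p ∈ (F a).toSet, ∀ b ∈ S, b ≠ a → ∀ q ∈ (F b).toSet, ¬ dom q p}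

/-- The regions remaining after removing the first `i` layers. -/
def remaining {n : ℕ} (F : Fin n → Rect) : ℕ → Set (Fin n)
  | 0 => Set.univ
  | i + 1 => remaining F i \ OPFon F (remaining F i)

/-- The `i`-th layer (0-indexed): the outer Pareto front of what remains after
removing the previous layers. -/
def layer {n : ℕ} (F : Fin n → Rect) (i : ℕ) : Set (Fin n) := OPFon F (remaining F i)

/-- Points dominated by no point of `S`. -/
def USet (S : Set (ℝ × ℝ)) : Set (ℝ × ℝ) := {p | ∀ s ∈ S, ¬ dom s p}

/-- The staircase of `S`: the topological boundary of `USet S`. -/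
def staircase (S : Set (ℝ × ℝ)) : Set (ℝ × ℝ) := frontier (USet S)

/-- `R_a` is dominated in `F`: in every realization of `F`, the point of `R_a`
is dominated by the point of some other region. -/
def dominatedIn {n : ℕ} (F : Fin n → Rect) (a : Fin n) : Prop :=
  ∀ Q : Fin n → ℝ × ℝ, IsRealization F Q → ∃ b, b ≠ a ∧ dom (Q b) (Q a)

/-- The permutation `σ` is realizable for the intervals `[a i, b i]`. -/
def realizable (k : ℕ) (a b : Fin k → ℝ) (σ : Equiv.Perm (Fin k)) : Prop :=
  ∃ z : Fin k → ℝ, Function.Injective z ∧ (∀ i, z i ∈ Set.Icc (a i) (b i)) ∧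
    StrictMono (fun i => z (σ i))

/-- The partial order along the Pareto front of the point sequence `P`:
`a ≺ b` iff both `P a` and `P b` lie on the Pareto front of `P` and `P a`
lies strictly to the left of, or strictly above, `P b`. -/
def precRel {n : ℕ} (P : Fin n → ℝ × ℝ) (a b : Fin n) : Prop :=
  (∀ c, c ≠ a → ¬ dom (P c) (P a)) ∧ (∀ c, c ≠ b → ¬ dom (P c) (P b)) ∧
    ((P a).1 < (P b).1 ∨ (P b).2 < (P a).2)

/-!
The bottom-left corner is the least point of a rectangle, and dominating a fixed point is an upward
closed condition. The realization by bottom-left corners is therefore the worst case: if in it the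
corner of `R` dominates `p'`, then in every realization the point chosen from `R` dominates `p'`.
-/

theorem stmt1_general {ι : Sort*} {α : Type*} [LE α] {R : ι → Set α} {b : ι → α} {U : Set α}
    (hb : ∀ i, IsLeast (R i) (b i)) (hU : IsUpperSet U) :
    (∀ P : ι → α, (∀ i, P i ∈ R i) → ∃ i, P i ∈ U) ↔ ∃ i, b i ∈ U := by
  constructor
  · intro h
    exact h b fun i => (hb i).1
  · rintro ⟨a, ha⟩ P hP
    exact ⟨a, hU ((hb a).2 (hP a)) ha⟩

theorem Rect.toSet_eq_Icc (R : Rect) : R.toSet = Set.Icc R.bl R.tr :=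
  Set.Icc_prod_Icc R.x1 R.x2 R.y1 R.y2

theorem Rect.bl_le_tr (R : Rect) : R.bl ≤ R.tr :=
  ⟨R.hx, R.hy⟩

theorem Rect.isLeast_toSet_bl (R : Rect) : IsLeast R.toSet R.bl :=
  R.toSet_eq_Icc ▸ isLeast_Icc R.bl_le_tr

theorem isUpperSet_setOf_dom (q : ℝ × ℝ) : IsUpperSet {p | dom p q} :=
  (isUpperSet_Ioi q.1).prod (isUpperSet_Ioi q.2)

/-- A point belongs to the inner Pareto front of a family of rectangles iff
it is dominated by the bottom-left corner of some region. -/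
theorem stmt1 {n : ℕ} (F : Fin n → Rect) (p' : ℝ × ℝ) :
    p' ∈ IPF F ↔ ∃ a : Fin n, dom (F a).bl p' :=
  stmt1_general (fun i => (F i).isLeast_toSet_bl) (isUpperSet_setOf_dom p')
end

section
/- Let F⁰ be a finite family of axis-aligned rectangles such that no region of F⁰ is contained in IPF(F⁰), let P ∼ F⁰, and let F = F⁰ ⊙ A for some subset A ⊆ F⁰ of retrieved regions. Let R_a be a region that is independent in F⁰ and let p_a ∈ R_a. Then retrieving R_a does not cause any non-point region to appear on the outer Pareto front: for every non-point region R_b ∈ F with b ≠ a, if R_b ∉ OPF(F) then R_b ∉ OPF(F ⊙ {R_a}). -/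
/-!
Membership in the outer Pareto front depends on top-right corners only: `R_b` is on the front if
and only if no other region's top-right corner dominates that of `R_b`. So replacing `R_a` can bring
`R_b` onto the front only if the corner of `R_a` dominated that of `R_b`, and hence every point of
`R_b`. In that case any point of `R_b` outside the inner Pareto front witnesses a dependency of
`R_a` to `R_b`.
-/

theorem dom.mono {p p' q q' : ℝ × ℝ} (h : dom p q) (hp : p ≤ p') (hq : q' ≤ q) : dom p' q' :=
  ⟨(hq.1.trans_lt h.1).trans_le hp.1, (hq.2.trans_lt h.2).trans_le hp.2⟩

theorem dom.asymm {p q : ℝ × ℝ} (h : dom p q) : ¬ dom q p :=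
  fun h' => lt_asymm h.1 h'.1

namespace Rect

theorem tr_mem (R : Rect) : R.tr ∈ R.toSet :=
  ⟨⟨R.hx, le_rfl⟩, ⟨R.hy, le_rfl⟩⟩

theorem le_tr_of_mem {R : Rect} {p : ℝ × ℝ} (hp : p ∈ R.toSet) : p ≤ R.tr :=
  ⟨hp.1.2, hp.2.2⟩

end Rect

theorem isPoint_pointRect (p : ℝ × ℝ) : (pointRect p).isPoint :=
  ⟨rfl, rfl⟩

section Family

variable {n : ℕ} {F : Fin n → Rect} {P : Fin n → ℝ × ℝ} {A : Set (Fin n)} {a b i : Fin n}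

theorem mem_OPF_iff_forall_not_dom_tr :
    b ∈ OPF F ↔ ∀ c, c ≠ b → ¬ dom (F c).tr (F b).tr := by
  constructor
  · rintro ⟨p, hp, hp_undominated⟩ c hc hdom
    exact hp_undominated c hc _ (F c).tr_mem (hdom.mono le_rfl (Rect.le_tr_of_mem hp))
  · intro h
    exact ⟨(F b).tr, (F b).tr_mem, fun c hc q hq hdom =>
      h c hc (hdom.mono (Rect.le_tr_of_mem hq) le_rfl)⟩

theorem outDep_of_dom_tr (hb : ¬ (F b).toSet ⊆ IPF F) (h : dom (F a).tr (F b).tr) :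
    outDep F a b := by
  have hab : a ≠ b := by
    rintro rfl
    exact h.asymm h
  obtain ⟨q, hq, hqI⟩ := Set.not_subset.mp hb
  exact ⟨hab, q, hq, fun hR => h.asymm (hR _ (F a).tr_mem), hqI,
    Or.inr (h.mono le_rfl (Rect.le_tr_of_mem hq))⟩

theorem retrieve_of_mem (hi : i ∈ A) : retrieve F P A i = pointRect (P i) :=
  if_pos hi

theorem retrieve_of_notMem (hi : i ∉ A) : retrieve F P A i = F i :=
  if_neg hi

theorem retrieve_insert (F : Fin n → Rect) (P : Fin n → ℝ × ℝ) (A : Set (Fin n)) (a : Fin n) :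
    retrieve F P (insert a A) = Function.update (retrieve F P A) a (pointRect (P a)) := by
  ext1 c
  obtain rfl | hca := eq_or_ne c a
  · rw [retrieve_of_mem (Set.mem_insert c A), Function.update_self]
  rw [Function.update_of_ne hca]
  by_cases hc : c ∈ A
  · rw [retrieve_of_mem hc, retrieve_of_mem (Set.mem_insert_of_mem a hc)]
  · rw [retrieve_of_notMem hc, retrieve_of_notMem (mt (Set.mem_of_mem_insert_of_ne · hca) hc)]

theorem tr_retrieve_le (hP : P i ∈ (F i).toSet) : (retrieve F P A i).tr ≤ (F i).tr := by
  by_cases hi : i ∈ A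
  · rw [retrieve_of_mem hi]
    exact Rect.le_tr_of_mem hP
  · rw [retrieve_of_notMem hi]

theorem retrieve_eq_of_not_isPoint (h : ¬ (retrieve F P A i).isPoint) :
    retrieve F P A i = F i :=
  retrieve_of_notMem fun hi => h (retrieve_of_mem hi ▸ isPoint_pointRect (P i))

theorem stmt2_general {F₀ : Fin n → Rect} (R : Rect) (hba : b ≠ a)
    (hb : ¬ (F₀ b).toSet ⊆ IPF F₀) (hdep : ¬ outDep F₀ a b)
    (hFa : (F a).tr ≤ (F₀ a).tr) (hFb : (F₀ b).tr ≤ (F b).tr) (hbnot : b ∉ OPF F) :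
    b ∉ OPF (Function.update F a R) := by
  have ha_not_dom : ¬ dom (F a).tr (F b).tr := fun h =>
    hdep (outDep_of_dom_tr hb (h.mono hFa hFb))
  contrapose! hbnot
  rw [mem_OPF_iff_forall_not_dom_tr] at hbnot ⊢
  intro c hc
  obtain rfl | hca := eq_or_ne c a
  · exact ha_not_dom
  · simpa only [Function.update_of_ne hca, Function.update_of_ne hba] using hbnot c hc

end Family

/-- Retrieving an independent region never causes a non-point region to
appear on the outer Pareto front. -/
theorem stmt2 {n : ℕ} (F0 : Fin n → Rect) (P : Fin n → ℝ × ℝ) (A : Set (Fin n))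
    (hF0 : ∀ i, ¬ (F0 i).toSet ⊆ IPF F0)
    (hP : IsRealization F0 P)
    (a : Fin n) (ha : indep F0 a)
    (b : Fin n) (hba : b ≠ a)
    (hbpt : ¬ (retrieve F0 P A b).isPoint)
    (hbnot : b ∉ OPF (retrieve F0 P A)) :
    b ∉ OPF (retrieve F0 P (A ∪ {a})) := by
  rw [Set.union_singleton, retrieve_insert]
  exact stmt2_general _ hba (hF0 b) (ha b) (tr_retrieve_le (hP a))
    (retrieve_eq_of_not_isPoint hbpt ▸ le_rfl) hbnot
end

section
/- Let G be a finite family of axis-aligned rectangles with layers G₁, G₂, …, G_k. If R_a ∈ Gᵢ and R_b ∈ G_j are distinct regions with j ≥ i, then no point p ∈ R_b dominates the region R_a; equivalently, no point of R_b dominates the top-right corner of R_a. -/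
theorem Rect.isGreatest_tr (R : Rect) : IsGreatest R.toSet R.tr :=
  ⟨⟨⟨R.hx, le_rfl⟩, ⟨R.hy, le_rfl⟩⟩, fun _ hq => ⟨hq.1.2, hq.2.2⟩⟩

theorem dom_of_dom_of_le {p q r : ℝ × ℝ} (hpq : dom p q) (hrq : r ≤ q) : dom p r :=
  ⟨hrq.1.trans_lt hpq.1, hrq.2.trans_lt hpq.2⟩

theorem domR_iff_dom_tr {p : ℝ × ℝ} {R : Rect} : domR p R ↔ dom p R.tr :=
  ⟨fun h => h R.tr R.isGreatest_tr.1, fun h _ hq => dom_of_dom_of_le h (R.isGreatest_tr.2 hq)⟩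

section Layers

variable {n : ℕ} {F : Fin n → Rect}

theorem OPFon_subset {S : Set (Fin n)} : OPFon F S ⊆ S :=
  fun _ ha => ha.1

theorem not_domR_of_mem_OPFon {S : Set (Fin n)} {a b : Fin n} {p : ℝ × ℝ}
    (ha : a ∈ OPFon F S) (hb : b ∈ S) (hba : b ≠ a) (hp : p ∈ (F b).toSet) :
    ¬ domR p (F a) := by
  obtain ⟨-, q, hq, hq_undominated⟩ := ha
  exact fun hdom => hq_undominated b hb hba p hp (hdom q hq)

theorem remaining_antitone : Antitone (remaining F) :=
  antitone_nat_of_succ_le fun _ => Set.sdiff_subset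

theorem layer_subset_remaining {i j : ℕ} (hij : i ≤ j) : layer F j ⊆ remaining F i :=
  OPFon_subset.trans (remaining_antitone hij)

end Layers

/-- If `R_a` is in layer `i` and `R_b` is in layer `j` with `j ≥ i`,
then no point of `R_b` dominates the region `R_a`; equivalently, no point of `R_b`
dominates the top-right corner of `R_a`. -/
theorem stmt3 {n : ℕ} (G : Fin n → Rect) (i j : ℕ) (hij : i ≤ j)
    (a b : Fin n) (hab : a ≠ b) (ha : a ∈ layer G i) (hb : b ∈ layer G j)
    (p : ℝ × ℝ) (hp : p ∈ (G b).toSet) :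
    ¬ domR p (G a) ∧ ¬ dom p (G a).tr := by
  have hb_remaining : b ∈ remaining G i := layer_subset_remaining hij hb
  have hdomR : ¬ domR p (G a) := not_domR_of_mem_OPFon ha hb_remaining hab.symm hp
  exact ⟨hdomR, mt domR_iff_dom_tr.mpr hdomR⟩
end

section
/- Let S be a finite nonempty point set in ℝ² with staircase C(S), and let p ∈ ℝ² be any point. Then the set {c ∈ C(S) : p dominates c} of staircase points dominated by p is a connected subset of ℝ²; that is, any point dominates a contiguous interval along the staircase. -/
/-
The set `USet S` is an upper set. The frontier of an upper set `U` of the plane other than `∅` and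
the whole plane contains no two points one of which dominates the other, and it meets every diagonal
`x - y = d`. Hence it meets each diagonal exactly once, and sending `d` to that point is a
1-Lipschitz parametrization of the frontier whose abscissa increases and whose ordinate decreases
with `d`. Being dominated by `p` bounds both coordinates from above, so it selects an interval of
parameters.
-/

theorem mem_interior_of_isUpperSet_of_lt {α β : Type*}
    [TopologicalSpace α] [LinearOrder α] [OrderClosedTopology α]
    [TopologicalSpace β] [LinearOrder β] [OrderClosedTopology β]
    {U : Set (α × β)} (hU : IsUpperSet U) {x y : α × β} (hx : x ∈ closure U)
    (h₁ : x.1 < y.1) (h₂ : x.2 < y.2) : y ∈ interior U := by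
  obtain ⟨z, ⟨hz₁, hz₂⟩, hzU⟩ :=
    mem_closure_iff.1 hx (Set.Iio y.1 ×ˢ Set.Iio y.2) (isOpen_Iio.prod isOpen_Iio) ⟨h₁, h₂⟩
  have hsub : Set.Ioi z.1 ×ˢ Set.Ioi z.2 ⊆ U := fun w hw ↦ hU ⟨hw.1.le, hw.2.le⟩ hzU
  exact interior_maximal hsub (isOpen_Ioi.prod isOpen_Ioi) ⟨hz₁, hz₂⟩

theorem isAntichain_dom_frontier {U : Set (ℝ × ℝ)} (hU : IsUpperSet U) :
    IsAntichain dom (frontier U) := fun _ ha _ hb _ hab ↦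
  ha.2 (mem_interior_of_isUpperSet_of_lt hU hb.1 hab.1 hab.2)

theorem exists_mem_frontier_fst_sub_snd_eq {U : Set (ℝ × ℝ)} (hU : IsUpperSet U) (hne : U.Nonempty)
    (huniv : U ≠ Set.univ) (d : ℝ) : ∃ c ∈ frontier U, c.1 - c.2 = d := by
  let ℓ : ℝ → ℝ × ℝ := fun t ↦ (d + t, t)
  have hℓ : Continuous ℓ := by fun_prop
  have hmeets : (ℓ ⁻¹' U).Nonempty := by
    obtain ⟨u, hu⟩ := hne
    refine ⟨max (u.1 - d) u.2, hU ⟨?_, le_max_right _ _⟩ hu⟩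
    exact sub_le_iff_le_add'.1 (le_max_left _ _)
  have hleaves : ℓ ⁻¹' U ≠ Set.univ := by
    obtain ⟨v, hv⟩ := (Set.ne_univ_iff_exists_notMem U).1 huniv
    refine (Set.ne_univ_iff_exists_notMem _).2
      ⟨min (v.1 - d) v.2, fun h ↦ hv (hU ⟨?_, min_le_right _ _⟩ h)⟩
    exact le_sub_iff_add_le'.1 (min_le_left _ _)
  obtain ⟨t, ht⟩ := nonempty_frontier_iff.2 ⟨hmeets, hleaves⟩
  exact ⟨ℓ t, hℓ.frontier_preimage_subset U ht, add_sub_cancel_right d t⟩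

section Antichain

variable {F : Set (ℝ × ℝ)} {a b : ℝ × ℝ}

theorem fst_le_and_snd_ge_of_isAntichain_dom (hF : IsAntichain dom F) (ha : a ∈ F) (hb : b ∈ F)
    (h : a.1 - a.2 ≤ b.1 - b.2) : a.1 ≤ b.1 ∧ b.2 ≤ a.2 := by
  constructor <;> by_contra! hlt
  · have hdom : dom a b := ⟨hlt, by linarith⟩
    exact hlt.ne (congrArg Prod.fst (hF.eq ha hb hdom)).symm
  · have hdom : dom b a := ⟨by linarith, hlt⟩
    exact hlt.ne (congrArg Prod.snd (hF.eq hb ha hdom)).symm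

theorem dist_le_dist_sub_of_isAntichain_dom (hF : IsAntichain dom F) (ha : a ∈ F) (hb : b ∈ F) :
    dist a b ≤ dist (a.1 - a.2) (b.1 - b.2) := by
  wlog h : a.1 - a.2 ≤ b.1 - b.2 generalizing a b
  · simpa only [dist_comm] using this hb ha (le_of_not_ge h)
  obtain ⟨h₁, h₂⟩ := fst_le_and_snd_ge_of_isAntichain_dom hF ha hb h
  rw [Prod.dist_eq, dist_comm a.1, dist_comm (a.1 - a.2), Real.dist_eq, Real.dist_eq, Real.dist_eq,
    abs_of_nonneg (sub_nonneg.2 h₁), abs_of_nonneg (sub_nonneg.2 h₂),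
    abs_of_nonneg (sub_nonneg.2 h)]
  exact max_le (by linarith) (by linarith)

theorem exists_continuous_monotone_antitone_range_eq (hF : IsAntichain dom F)
    (hmeets : ∀ d : ℝ, ∃ c ∈ F, c.1 - c.2 = d) :
    ∃ γ : ℝ → ℝ × ℝ, Continuous γ ∧ Monotone (fun d ↦ (γ d).1) ∧ Antitone (fun d ↦ (γ d).2) ∧
      Set.range γ = F := by
  choose γ hγF hγ using hmeets
  have hlip : LipschitzWith 1 γ := LipschitzWith.mk_one fun d e ↦ by
    simpa only [hγ] using dist_le_dist_sub_of_isAntichain_dom hF (hγF d) (hγF e)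
  have hmono {d e : ℝ} (hde : d ≤ e) : (γ d).1 ≤ (γ e).1 ∧ (γ e).2 ≤ (γ d).2 :=
    fst_le_and_snd_ge_of_isAntichain_dom hF (hγF d) (hγF e) (by rwa [hγ, hγ])
  have hsurj : F ⊆ Set.range γ := fun c hc ↦ ⟨c.1 - c.2, dist_le_zero.1 <| by
    simpa only [hγ, dist_self] using dist_le_dist_sub_of_isAntichain_dom hF (hγF (c.1 - c.2)) hc⟩
  exact ⟨γ, hlip.continuous, fun _ _ h ↦ (hmono h).1, fun _ _ h ↦ (hmono h).2,
    (Set.range_subset_iff.2 hγF).antisymm hsurj⟩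

end Antichain

theorem isPreconnected_mem_range_and_dom {ι : Type*} [ConditionallyCompleteLinearOrder ι]
    [DenselyOrdered ι] [TopologicalSpace ι] [OrderTopology ι] {γ : ι → ℝ × ℝ} (hγ : Continuous γ)
    (hfst : Monotone fun d ↦ (γ d).1) (hsnd : Antitone fun d ↦ (γ d).2) (p : ℝ × ℝ) :
    IsPreconnected {c | c ∈ Set.range γ ∧ dom p c} := by
  have hord : (γ ⁻¹' {c | dom p c}).OrdConnected :=
    (Set.ordConnected_Iio.preimage_mono hfst).inter (Set.ordConnected_Iio.preimage_anti hsnd)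
  have himage : γ '' (γ ⁻¹' {c | dom p c}) = {c | c ∈ Set.range γ ∧ dom p c} :=
    Set.image_preimage_eq_range_inter
  exact himage ▸ hord.isPreconnected.image γ hγ.continuousOn

theorem isPreconnected_mem_frontier_and_dom {U : Set (ℝ × ℝ)} (hU : IsUpperSet U) (p : ℝ × ℝ) :
    IsPreconnected {c | c ∈ frontier U ∧ dom p c} := by
  rcases (frontier U).eq_empty_or_nonempty with hempty | hnonempty
  · simp only [hempty, Set.mem_empty_iff_false, false_and, Set.ofPred_false, isPreconnected_empty]
  obtain ⟨hne, huniv⟩ := nonempty_frontier_iff.1 hnonempty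
  obtain ⟨γ, hγ, hfst, hsnd, hrange⟩ := exists_continuous_monotone_antitone_range_eq
    (isAntichain_dom_frontier hU) (exists_mem_frontier_fst_sub_snd_eq hU hne huniv)
  exact hrange ▸ isPreconnected_mem_range_and_dom hγ hfst hsnd p

theorem isUpperSet_USet (S : Set (ℝ × ℝ)) : IsUpperSet (USet S) := fun _ _ hxy hx s hs hdom ↦
  hx s hs ⟨hxy.1.trans_lt hdom.1, hxy.2.trans_lt hdom.2⟩

theorem stmt5_general (S : Set (ℝ × ℝ)) (p : ℝ × ℝ) :
    IsPreconnected {c | c ∈ staircase S ∧ dom p c} :=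
  isPreconnected_mem_frontier_and_dom (isUpperSet_USet S) p

/-- Any point dominates a contiguous (connected) interval along the
staircase of a finite nonempty point set. -/
theorem stmt5 (S : Finset (ℝ × ℝ)) (hS : S.Nonempty) (p : ℝ × ℝ) :
    IsPreconnected {c | c ∈ staircase (S : Set (ℝ × ℝ)) ∧ dom p c} :=
  stmt5_general S p
end

section
/- Let F⁰ be a finite family of axis-aligned rectangles none of which is contained in IPF(F⁰). For each R ∈ F⁰ let ℓ(R) be the leftmost point of the top facet of R that is not in IPF(F⁰), and let r(R) be the bottommost point of the right facet of R that is not in IPF(F⁰) (both exist since the top-right corner of R is not in IPF(F⁰)). Then for distinct R_a, R_b ∈ F⁰, the region R_a has an outgoing dependency in F⁰ to R_b if and only if either (1) the top-right corner of R_a dominates ℓ(R_b) or dominates r(R_b), or (2) the top facet or right facet of R_a intersects the top facet or right facet of R_b at a point not in IPF(F⁰). -/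
/-!
Write `A.reach` for the points that lie in `A` or are dominated by its top-right corner, and call
a point of `B` not dominated by the corner of `B` an upper boundary point. All of `A.reach` lies
weakly below the corner of `A`, so if the corner of `B` dominates `A`, then no upper boundary point
of `B` is in `A.reach`. Otherwise any point of `B` in `A.reach` can be pushed up or to the right
within `A.reach` to an upper boundary point of `B`, and it stays outside the inner Pareto front,
which is a lower set. Hence a dependency of `A` to `B` amounts to an upper boundary point of `B`
outside the front and in `A.reach`. Such a point either lies on the upper boundary of `A` or is
dominated by the corner of `A`; in the latter case the corner also dominates the least point
outside the front on the same facet of `B`, which is `ℓ(B)` or `r(B)`.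
-/

theorem dom.trans_ge {p q q' : ℝ × ℝ} (h : dom p q) (hq : q' ≤ q) : dom p q' :=
  ⟨hq.1.trans_lt h.1, hq.2.trans_lt h.2⟩

theorem dom.ge {p q : ℝ × ℝ} (h : dom p q) : q ≤ p :=
  ⟨h.1.le, h.2.le⟩

theorem isLowerSet_IPF {n : ℕ} (F : Fin n → Rect) : IsLowerSet (IPF F) := by
  intro p q hqp hp P hP
  obtain ⟨i, hi⟩ := hp P hP
  exact ⟨i, hi.trans_ge hqp⟩

theorem exists_mem_dom_iff_of_isLeast {T : Set (ℝ × ℝ)} {p t : ℝ × ℝ} (ht : IsLeast T t) :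
    (∃ q ∈ T, dom p q) ↔ dom p t :=
  ⟨fun ⟨_, hq, hpq⟩ => hpq.trans_ge (ht.2 hq), fun h => ⟨t, ht.1, h⟩⟩

namespace Rect

variable {A B R : Rect} {S : Set (ℝ × ℝ)} {p q l r : ℝ × ℝ}

theorem mem_toSet_iff : q ∈ R.toSet ↔ R.bl ≤ q ∧ q ≤ R.tr := by
  rw [toSet, Set.Icc_prod_Icc]
  rfl

theorem bl_le_tr_s10 (R : Rect) : R.bl ≤ R.tr :=
  ⟨R.hx, R.hy⟩

theorem domR_iff_dom_tr : domR p R ↔ dom p R.tr :=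
  ⟨fun h => h _ (mem_toSet_iff.2 ⟨R.bl_le_tr_s10, le_rfl⟩),
    fun h _ hq => h.trans_ge (mem_toSet_iff.1 hq).2⟩

theorem isLeast_topFacet_diff
    (h : l ∈ R.topFacet ∧ l ∉ S ∧ ∀ q ∈ R.topFacet, q ∉ S → l.1 ≤ q.1) :
    IsLeast (R.topFacet \ S) l :=
  ⟨⟨h.1, h.2.1⟩, fun q hq => ⟨h.2.2 q hq.1 hq.2, (h.1.2.trans hq.1.2.symm).le⟩⟩

theorem isLeast_rightFacet_diff
    (h : r ∈ R.rightFacet ∧ r ∉ S ∧ ∀ q ∈ R.rightFacet, q ∉ S → r.2 ≤ q.2) :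
    IsLeast (R.rightFacet \ S) r :=
  ⟨⟨h.1, h.2.1⟩, fun q hq => ⟨(h.1.1.trans hq.1.1.symm).le, h.2.2 q hq.1 hq.2⟩⟩

/-- The upper boundary of a rectangle, on which dependencies can be detected: the union of its top
facet and its right facet. -/
def upperBoundary (R : Rect) : Set (ℝ × ℝ) := R.topFacet ∪ R.rightFacet

theorem mem_upperBoundary_iff : q ∈ R.upperBoundary ↔ q ∈ R.toSet ∧ ¬ dom R.tr q := by
  constructor
  · rintro (⟨hx, hy : q.2 = R.y2⟩ | ⟨hx : q.1 = R.x2, hy⟩)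
    · exact ⟨⟨hx, hy ▸ R.hy, hy.le⟩, fun h => h.2.ne hy⟩
    · exact ⟨⟨⟨hx ▸ R.hx, hx.le⟩, hy⟩, fun h => h.1.ne hx⟩
  · rintro ⟨⟨hx, hy⟩, hdom⟩
    rcases hx.2.lt_or_eq with hlt | heq
    · exact Or.inl ⟨hx, hy.2.eq_of_not_lt fun h => hdom ⟨hlt, h⟩⟩
    · exact Or.inr ⟨heq, hy⟩

theorem exists_mem_upperBoundary_diff_dom_iff (hl : IsLeast (R.topFacet \ S) l)
    (hr : IsLeast (R.rightFacet \ S) r) :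
    (∃ q ∈ R.upperBoundary \ S, dom p q) ↔ dom p l ∨ dom p r := by
  rw [← exists_mem_dom_iff_of_isLeast hl, ← exists_mem_dom_iff_of_isLeast hr, upperBoundary,
    Set.union_sdiff_distrib]
  simp only [Set.mem_union, or_and_right, exists_or]

/-- The reach of a rectangle: the points in the rectangle or dominated by its top-right corner.
These are the points `q` satisfying condition (III) of an outgoing dependency. -/
def reach (R : Rect) : Set (ℝ × ℝ) := {q | q ∈ R.toSet ∨ dom R.tr q}

theorem mem_reach_iff : q ∈ R.reach ↔ dom R.tr q ∨ q ∈ R.upperBoundary := by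
  rw [mem_upperBoundary_iff]
  change q ∈ R.toSet ∨ dom R.tr q ↔ _
  tauto

theorem le_tr_of_mem_reach (hq : q ∈ R.reach) : q ≤ R.tr :=
  hq.elim (fun h => (mem_toSet_iff.1 h).2) dom.ge

theorem not_dom_tr_of_mem_upperBoundary_of_mem_reach (hqB : q ∈ B.upperBoundary)
    (hqA : q ∈ A.reach) : ¬ dom B.tr A.tr :=
  fun h => (mem_upperBoundary_iff.1 hqB).2 (h.trans_ge (le_tr_of_mem_reach hqA))

theorem inf_tr_mem_upperBoundary (hp : ¬ dom R.tr p) (hq : q ∈ R.toSet) (hqp : q ≤ p) :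
    p ⊓ R.tr ∈ R.upperBoundary := by
  obtain ⟨hbl, htr⟩ := mem_toSet_iff.1 hq
  have hmem : p ⊓ R.tr ∈ R.toSet := mem_toSet_iff.2 ⟨hbl.trans (le_inf hqp htr), inf_le_right⟩
  have hdom : ¬ dom R.tr (p ⊓ R.tr) := fun h =>
    hp ⟨lt_of_not_ge (inf_lt_right.1 h.1), lt_of_not_ge (inf_lt_right.1 h.2)⟩
  exact mem_upperBoundary_iff.2 ⟨hmem, hdom⟩

theorem exists_ge_mem_upperBoundary_dom (hp : ¬ p ≤ R.tr) (hq : q ∈ R.toSet) (hpq : dom p q) :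
    ∃ q' ∈ R.upperBoundary, dom p q' ∧ q ≤ q' := by
  obtain ⟨hx, hy⟩ := hq
  rcases not_and_or.1 hp with hlt | hlt
  · exact ⟨(R.x2, q.2), Or.inr ⟨rfl, hy⟩, ⟨lt_of_not_ge hlt, hpq.2⟩, hx.2, le_rfl⟩
  · exact ⟨(q.1, R.y2), Or.inl ⟨hx, rfl⟩, ⟨hpq.1, lt_of_not_ge hlt⟩, le_rfl, hy.2⟩

theorem exists_ge_mem_upperBoundary_mem_reach (hAB : ¬ dom B.tr A.tr) (hqB : q ∈ B.toSet)
    (hqA : q ∈ A.reach) : ∃ q' ∈ B.upperBoundary, q' ∈ A.reach ∧ q ≤ q' := by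
  have hqA_le : q ≤ A.tr := le_tr_of_mem_reach hqA
  have hq_le : q ≤ A.tr ⊓ B.tr := le_inf hqA_le (mem_toSet_iff.1 hqB).2
  by_cases hbl : A.bl ≤ A.tr ⊓ B.tr
  · exact ⟨A.tr ⊓ B.tr, inf_tr_mem_upperBoundary hAB hqB hqA_le,
      Or.inl (mem_toSet_iff.2 ⟨hbl, inf_le_left⟩), hq_le⟩
  · have hdom : dom A.tr q :=
      hqA.resolve_left fun h => hbl ((mem_toSet_iff.1 h).1.trans hq_le)
    have hnle : ¬ A.tr ≤ B.tr := fun h => hbl (le_inf A.bl_le_tr_s10 (A.bl_le_tr_s10.trans h))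
    obtain ⟨q', hq'B, hq'A, hqq'⟩ := exists_ge_mem_upperBoundary_dom hnle hqB hdom
    exact ⟨q', hq'B, Or.inr hq'A, hqq'⟩

theorem exists_dependency_iff_exists_mem_upperBoundary (hS : IsLowerSet S) :
    (∃ q ∈ B.toSet, ¬ domR B.tr A ∧ q ∉ S ∧ q ∈ A.reach) ↔
      ∃ q ∈ B.upperBoundary \ S, q ∈ A.reach := by
  rw [domR_iff_dom_tr]
  constructor
  · rintro ⟨q, hqB, hAB, hqS, hqA⟩
    obtain ⟨q', hq'B, hq'A, hqq'⟩ := exists_ge_mem_upperBoundary_mem_reach hAB hqB hqA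
    exact ⟨q', ⟨hq'B, fun h => hqS (hS hqq' h)⟩, hq'A⟩
  · rintro ⟨q, ⟨hqB, hqS⟩, hqA⟩
    exact ⟨q, (mem_upperBoundary_iff.1 hqB).1,
      not_dom_tr_of_mem_upperBoundary_of_mem_reach hqB hqA, hqS, hqA⟩

end Rect

theorem stmt10_general (A B : Rect) {S : Set (ℝ × ℝ)} (hS : IsLowerSet S) {l r : ℝ × ℝ}
    (hl : IsLeast (B.topFacet \ S) l) (hr : IsLeast (B.rightFacet \ S) r) :
    (∃ q ∈ B.toSet, ¬ domR B.tr A ∧ q ∉ S ∧ (q ∈ A.toSet ∨ dom A.tr q)) ↔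
      ((dom A.tr l ∨ dom A.tr r) ∨
        ∃ q, q ∈ A.topFacet ∪ A.rightFacet ∧ q ∈ B.topFacet ∪ B.rightFacet ∧ q ∉ S) :=
  calc
    _ ↔ ∃ q ∈ B.upperBoundary \ S, q ∈ A.reach :=
      Rect.exists_dependency_iff_exists_mem_upperBoundary hS
    _ ↔ (∃ q ∈ B.upperBoundary \ S, dom A.tr q) ∨
        ∃ q ∈ B.upperBoundary \ S, q ∈ A.upperBoundary := by
      simp only [Rect.mem_reach_iff, and_or_left, exists_or]
    _ ↔ _ := or_congr (Rect.exists_mem_upperBoundary_diff_dom_iff hl hr)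
      (exists_congr fun _ => and_comm)

/-- Characterization of outgoing dependencies via the representative points
`ℓ(R)` (leftmost point of the top facet not in the inner Pareto front) and `r(R)`
(bottommost point of the right facet not in the inner Pareto front). -/
theorem stmt10 {n : ℕ} (F : Fin n → Rect)
    (hF : ∀ i, ¬ (F i).toSet ⊆ IPF F)
    (l r : Fin n → ℝ × ℝ)
    (hl : ∀ i, l i ∈ (F i).topFacet ∧ l i ∉ IPF F ∧
      ∀ q ∈ (F i).topFacet, q ∉ IPF F → (l i).1 ≤ q.1)
    (hr : ∀ i, r i ∈ (F i).rightFacet ∧ r i ∉ IPF F ∧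
      ∀ q ∈ (F i).rightFacet, q ∉ IPF F → (r i).2 ≤ q.2)
    (a b : Fin n) (hab : a ≠ b) :
    outDep F a b ↔
      ((dom (F a).tr (l b) ∨ dom (F a).tr (r b)) ∨
        ∃ q, q ∈ (F a).topFacet ∪ (F a).rightFacet ∧
          q ∈ (F b).topFacet ∪ (F b).rightFacet ∧ q ∉ IPF F) := by
  exact (and_iff_right hab).trans <| stmt10_general (F a) (F b) (isLowerSet_IPF F)
    (Rect.isLeast_topFacet_diff (hl b)) (Rect.isLeast_rightFacet_diff (hr b))
end

section
/- For all real numbers x, y ≥ 0, it holds that x·log(2+x) + y·log(2+y) ≥ (1/4)·(x+y)·log(2+x+y), where log denotes the natural logarithm (the inequality is independent of the base of the logarithm). -/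
/-!
Chebyshev's sum inequality for the numbers `xᵢ` and `log (c + xᵢ)`, which are ordered alike, gives
`(∑ xᵢ) (∑ log (c + xᵢ)) ≤ n ∑ xᵢ log (c + xᵢ)`. For `c ≥ 1` the map `t ↦ log (c + t)` is
subadditive on `t ≥ 0`, because `(c + a) (c + b) ≥ c + a + b`, so that
`(∑ xᵢ) log (c + ∑ xᵢ) ≤ n ∑ xᵢ log (c + xᵢ)`. With `n = 2` this has `1 / 2` in place of `1 / 4`.
-/

theorem sum_mul_apply_sum_le_card_mul_sum {ι R : Type*} [Semiring R] [LinearOrder R]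
    [IsStrictOrderedRing R] [ExistsAddOfLE R] {f : R → R} (hmono : MonotoneOn f (Set.Ici 0))
    (hsub : ∀ a b, 0 ≤ a → 0 ≤ b → f (a + b) ≤ f a + f b) {s : Finset ι} {x : ι → R}
    (hx : ∀ i ∈ s, 0 ≤ x i) :
    (∑ i ∈ s, x i) * f (∑ i ∈ s, x i) ≤ s.card * ∑ i ∈ s, x i * f (x i) := by
  obtain rfl | hs := s.eq_empty_or_nonempty
  · simp
  have apply_sum_le : f (∑ i ∈ s, x i) ≤ ∑ i ∈ s, f (x i) :=
    Finset.le_sum_nonempty_of_subadditive_on_pred f (0 ≤ ·) hsub (fun _ _ ↦ add_nonneg) x s hs hx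
  have monovary : MonovaryOn x (fun i ↦ f (x i)) s :=
    fun i hi j hj hlt ↦ (hmono.reflect_lt (hx i hi) (hx j hj) hlt).le
  calc (∑ i ∈ s, x i) * f (∑ i ∈ s, x i)
      ≤ (∑ i ∈ s, x i) * ∑ i ∈ s, f (x i) :=
        mul_le_mul_of_nonneg_left apply_sum_le (Finset.sum_nonneg hx)
    _ ≤ s.card * ∑ i ∈ s, x i * f (x i) := monovary.sum_mul_sum_le_card_mul_sum

theorem monotoneOn_log_const_add {c : ℝ} (hc : 0 < c) :
    MonotoneOn (fun t ↦ Real.log (c + t)) (Set.Ici 0) :=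
  fun _ ha _ _ hab ↦
    Real.log_le_log (add_pos_of_pos_of_nonneg hc ha) (add_le_add_right hab c)

theorem log_const_add_add_le {a b c : ℝ} (hc : 1 ≤ c) (ha : 0 ≤ a) (hb : 0 ≤ b) :
    Real.log (c + (a + b)) ≤ Real.log (c + a) + Real.log (c + b) := by
  have le_mul : c + (a + b) ≤ (c + a) * (c + b) := by
    nlinarith [mul_nonneg ha hb, mul_nonneg (sub_nonneg.2 hc) (add_nonneg ha hb)]
  calc Real.log (c + (a + b))
      ≤ Real.log ((c + a) * (c + b)) := Real.log_le_log (by positivity) le_mul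
    _ = Real.log (c + a) + Real.log (c + b) := Real.log_mul (by positivity) (by positivity)

theorem stmt13_general {ι : Type*} {s : Finset ι} {x : ι → ℝ} {c : ℝ} (hc : 1 ≤ c)
    (hx : ∀ i ∈ s, 0 ≤ x i) :
    (∑ i ∈ s, x i) * Real.log (c + ∑ i ∈ s, x i) ≤
      s.card * ∑ i ∈ s, x i * Real.log (c + x i) :=
  sum_mul_apply_sum_le_card_mul_sum (monotoneOn_log_const_add (zero_lt_one.trans_le hc))
    (fun _ _ ↦ log_const_add_add_le hc) hx

theorem add_mul_log_const_add_add_le {x y c : ℝ} (hc : 1 ≤ c) (hx : 0 ≤ x) (hy : 0 ≤ y) :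
    (x + y) * Real.log (c + x + y) ≤ 2 * (x * Real.log (c + x) + y * Real.log (c + y)) := by
  simpa [← add_assoc] using stmt13_general (s := Finset.univ) (x := ![x, y]) hc
    (by simp [Fin.forall_fin_two, hx, hy])

/-- For all reals `x, y ≥ 0`,
`x·log(2+x) + y·log(2+y) ≥ (1/4)·(x+y)·log(2+x+y)`. -/
theorem stmt13 (x y : ℝ) (hx : 0 ≤ x) (hy : 0 ≤ y) :
    (1 / 4) * (x + y) * Real.log (2 + x + y) ≤
      x * Real.log (2 + x) + y * Real.log (2 + y) := by
  linarith [add_mul_log_const_add_add_le one_le_two hx hy,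
    mul_nonneg (add_nonneg hx hy) (Real.log_nonneg (by linarith : 1 ≤ 2 + x + y))]
end

section
/- Let k ≥ 1 and m ≥ 1 be given, and let [a₁,b₁], …, [a_k,b_k] be closed real intervals with [aᵢ,bᵢ] ⊆ [0,m] and bᵢ − aᵢ ≥ 1 for all i. Let Z be the set of realizable permutations of {1,…,k}. Then |Z| ≥ k! · (∏_{i=1}^{k} (bᵢ − aᵢ)) / m^k. -/
/-!
Up to a null set, the cube `[0,m]^k` is the disjoint union of the `k!` chambers
`{z | z (σ 1) < ⋯ < z (σ k)}`. Permuting coordinates preserves the measure, so each chamber has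
volume `m^k / k!`. The box `∏ [aᵢ, bᵢ]` lies in the cube and meets precisely the chambers of the
realizable permutations, so its volume is at most `|Z| m^k / k!`.
-/

open MeasureTheory Set

section OrderChamber

variable {α : Type*} {n : ℕ}

/-- The set of tuples that `σ` sorts into strictly increasing order: the open chamber indexed by
`σ` of the arrangement of hyperplanes `z i = z j`. The permutation maps ranks to indices, as in
`Tuple.sort`. -/
def orderChamber (α : Type*) [Preorder α] {n : ℕ} (σ : Equiv.Perm (Fin n)) : Set (Fin n → α) :=
  {z | StrictMono (z ∘ σ)}

lemma injective_of_mem_orderChamber [Preorder α] {σ : Equiv.Perm (Fin n)} {z : Fin n → α}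
    (hz : z ∈ orderChamber α σ) : Function.Injective z :=
  (Function.Injective.of_comp_iff' z σ.bijective).1 (StrictMono.injective hz)

lemma pairwise_disjoint_orderChamber [PartialOrder α] :
    Pairwise (Function.onFun Disjoint (orderChamber (n := n) α)) := by
  refine fun σ τ hne => Set.disjoint_left.2 fun z hσ hτ => hne ?_
  have hcomp : z ∘ σ = z ∘ τ := Tuple.unique_monotone hσ.monotone hτ.monotone
  exact DFunLike.coe_injective ((injective_of_mem_orderChamber hσ).comp_left hcomp)

lemma iUnion_orderChamber [LinearOrder α] :
    ⋃ σ, orderChamber (n := n) α σ = {z | Function.Injective z} := by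
  refine Subset.antisymm (iUnion_subset fun σ z hz => injective_of_mem_orderChamber hz) ?_
  exact fun z hz => mem_iUnion.2 ⟨Tuple.sort z,
    (Tuple.monotone_sort z).strictMono_of_injective (hz.comp (Tuple.sort z).injective)⟩

lemma measurableSet_orderChamber [LinearOrder α] [TopologicalSpace α] [OrderClosedTopology α]
    [SecondCountableTopology α] [MeasurableSpace α] [OpensMeasurableSpace α]
    (σ : Equiv.Perm (Fin n)) : MeasurableSet (orderChamber α σ) := by
  simp only [orderChamber, StrictMono, Function.comp_apply, ofPred_forall]
  exact .iInter fun i => .iInter fun j => .iInter fun _ =>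
    measurableSet_lt (measurable_pi_apply _) (measurable_pi_apply _)

end OrderChamber

section ProductMeasure

variable {α : Type*} [MeasurableSpace α]

lemma pi_eval_eq_eval_null {ι : Type*} [Fintype ι] [MeasurableEq α] (μ : ι → Measure α)
    [∀ i, SigmaFinite (μ i)] {i j : ι} (hij : j ≠ i) [NullSingletonClass (μ j)] :
    Measure.pi μ {z | z i = z j} = 0 := by
  classical
  let E : Set (({l // l = i} → α) × ({l // l ≠ i} → α)) := {p | p.1 ⟨i, rfl⟩ = p.2 ⟨j, hij⟩}
  have hE : MeasurableSet E := measurableSet_eq_fun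
    ((measurable_pi_apply _).comp measurable_fst) ((measurable_pi_apply _).comp measurable_snd)
  have hsection : ∀ x, Measure.pi (fun l : {l // l ≠ i} => μ l) (Prod.mk x ⁻¹' E) = 0 := fun x => by
    simpa only [E, preimage_ofPred_eq, eq_comm] using
      Measure.pi_hyperplane (fun l : {l // l ≠ i} => μ l) ⟨j, hij⟩ (x ⟨i, rfl⟩)
  exact ((measurePreserving_piEquivPiSubtypeProd μ (· = i)).measure_preimage_equiv E).trans
    ((Measure.measure_prod_null hE).2 (.of_forall hsection))

lemma ae_injective_pi {ι : Type*} [Fintype ι] [MeasurableEq α] (μ : ι → Measure α)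
    [∀ i, SigmaFinite (μ i)] [∀ i, NullSingletonClass (μ i)] :
    ∀ᵐ z ∂Measure.pi μ, Function.Injective z := by
  have hne : ∀ i j, j ≠ i → ∀ᵐ z ∂Measure.pi μ, z i ≠ z j := fun i j hij => by
    simpa only [ae_iff, not_not] using pi_eval_eq_eval_null μ hij
  filter_upwards [ae_all_iff.2 fun i => ae_all_iff.2 fun j => ae_all_iff.2 (hne i j)]
    with z hz i j hzij
  by_contra h
  exact hz i j (Ne.symm h) hzij

variable (μ : Measure α) [SigmaFinite μ] {n : ℕ}

lemma pi_orderChamber_eq [Preorder α] (σ τ : Equiv.Perm (Fin n)) :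
    Measure.pi (fun _ => μ) (orderChamber α σ) = Measure.pi (fun _ => μ) (orderChamber α τ) := by
  let e := MeasurableEquiv.arrowCongr' (σ.symm.trans τ) (MeasurableEquiv.refl α)
  have he : MeasurePreserving e (Measure.pi fun _ => μ) (Measure.pi fun _ => μ) :=
    measurePreserving_arrowCongr' _ _ _ _ fun _ => MeasurePreserving.id μ
  have hcomp : ∀ z, e z ∘ τ = z ∘ σ := fun z => funext fun i =>
    congrArg z (congrArg σ (τ.symm_apply_apply i))
  have hpreimage : e ⁻¹' orderChamber α τ = orderChamber α σ := by
    simp only [orderChamber, preimage_ofPred_eq, hcomp]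
  rw [← hpreimage, he.measure_preimage_equiv]

variable [LinearOrder α] [TopologicalSpace α] [OrderClosedTopology α]
  [SecondCountableTopology α] [OpensMeasurableSpace α] [NullSingletonClass μ]

lemma pi_eq_sum_inter_orderChamber (A : Set (Fin n → α)) :
    Measure.pi (fun _ => μ) A = ∑ σ, Measure.pi (fun _ => μ) (A ∩ orderChamber α σ) := by
  have hae : ∀ᵐ z ∂Measure.pi fun _ => μ, z ∈ ⋃ σ, orderChamber (n := n) α σ := by
    simpa only [iUnion_orderChamber, mem_ofPred_eq] using ae_injective_pi fun _ : Fin n => μ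
  calc Measure.pi (fun _ => μ) A
      = (Measure.pi fun _ => μ).restrict A (⋃ σ, orderChamber α σ) := by
        rw [measure_of_measure_compl_eq_zero (ae_iff.1 (ae_restrict_of_ae hae)),
          Measure.restrict_apply_univ]
    _ = ∑ σ, Measure.pi (fun _ => μ) (A ∩ orderChamber α σ) := by
        rw [measure_iUnion pairwise_disjoint_orderChamber measurableSet_orderChamber,
          tsum_fintype]
        simp only [Measure.restrict_apply (measurableSet_orderChamber _), inter_comm]

lemma factorial_mul_pi_orderChamber (σ : Equiv.Perm (Fin n)) :
    n.factorial * Measure.pi (fun _ => μ) (orderChamber α σ) = μ univ ^ n := by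
  have hsum := pi_eq_sum_inter_orderChamber μ (univ : Set (Fin n → α))
  simpa only [univ_inter, pi_orderChamber_eq μ _ σ, Finset.sum_const, Finset.card_univ,
    Fintype.card_perm, Fintype.card_fin, nsmul_eq_mul, Measure.pi_univ, Finset.prod_const]
    using hsum.symm

lemma pi_le_ncard_mul_pi_orderChamber (A : Set (Fin n → α)) (τ : Equiv.Perm (Fin n)) :
    Measure.pi (fun _ => μ) A ≤ {σ | (A ∩ orderChamber α σ).Nonempty}.ncard *
      Measure.pi (fun _ => μ) (orderChamber α τ) := by
  classical
  have hle : ∀ σ, Measure.pi (fun _ => μ) (A ∩ orderChamber α σ) ≤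
      Measure.pi (fun _ => μ) (orderChamber α τ) := fun σ =>
    (measure_mono inter_subset_right).trans_eq (pi_orderChamber_eq μ σ τ)
  calc Measure.pi (fun _ => μ) A
      = ∑ σ, Measure.pi (fun _ => μ) (A ∩ orderChamber α σ) := pi_eq_sum_inter_orderChamber μ A
    _ = ∑ σ with (A ∩ orderChamber α σ).Nonempty,
          Measure.pi (fun _ => μ) (A ∩ orderChamber α σ) :=
        (Finset.sum_filter_of_ne fun σ _ => nonempty_of_measure_ne_zero).symm
    _ ≤ Finset.card {σ | (A ∩ orderChamber α σ).Nonempty} •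
          Measure.pi (fun _ => μ) (orderChamber α τ) :=
        Finset.sum_le_card_nsmul _ _ _ fun σ _ => hle σ
    _ = _ := by rw [nsmul_eq_mul, ncard_eq_toFinset_card', toFinset_ofPred]

lemma factorial_mul_pi_le_ncard_mul (A : Set (Fin n → α)) :
    n.factorial * Measure.pi (fun _ => μ) A ≤
      {σ | (A ∩ orderChamber α σ).Nonempty}.ncard * μ univ ^ n := by
  grw [pi_le_ncard_mul_pi_orderChamber μ A 1, ← factorial_mul_pi_orderChamber μ 1, mul_left_comm]

end ProductMeasure

lemma realizable_iff_inter_orderChamber_nonempty {k : ℕ} {a b : Fin k → ℝ}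
    {σ : Equiv.Perm (Fin k)} :
    realizable k a b σ ↔ (Icc a b ∩ orderChamber ℝ σ).Nonempty := by
  constructor
  · rintro ⟨z, -, hz, hσ⟩
    exact ⟨z, ⟨fun i => (hz i).1, fun i => (hz i).2⟩, hσ⟩
  · rintro ⟨z, hz, hσ⟩
    exact ⟨z, injective_of_mem_orderChamber hσ, fun i => ⟨hz.1 i, hz.2 i⟩, hσ⟩

theorem stmt14_general (k : ℕ) (m : ℝ) (hm : 0 < m) (a b : Fin k → ℝ)
    (hab : ∀ i, a i ≤ b i) (hsub : ∀ i, Icc (a i) (b i) ⊆ Icc 0 m) :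
    (Nat.factorial k : ℝ) * (∏ i, (b i - a i)) / m ^ k ≤
      (({σ : Equiv.Perm (Fin k) | realizable k a b σ}.ncard : ℕ) : ℝ) := by
  let μ : Measure ℝ := volume.restrict (Icc 0 m)
  have hcube : μ univ = ENNReal.ofReal m := by simp [μ]
  have hside : ∀ i, μ (Icc (a i) (b i)) = ENNReal.ofReal (b i - a i) := fun i => by
    rw [Measure.restrict_eq_self _ (hsub i), Real.volume_Icc]
  have hbox : Measure.pi (fun _ => μ) (Icc a b) = ENNReal.ofReal (∏ i, (b i - a i)) := by
    rw [← pi_univ_Icc, Measure.pi_pi,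
      ENNReal.ofReal_prod_of_nonneg fun i _ => sub_nonneg.2 (hab i)]
    exact Finset.prod_congr rfl fun i _ => hside i
  have hcount := factorial_mul_pi_le_ncard_mul μ (Icc a b)
  simp only [← realizable_iff_inter_orderChamber_nonempty, hbox, hcube] at hcount
  rw [div_le_iff₀ (pow_pos hm k), ← ENNReal.ofReal_le_ofReal_iff (by positivity)]
  simpa only [ENNReal.ofReal_mul (Nat.cast_nonneg _), ENNReal.ofReal_natCast,
    ENNReal.ofReal_pow hm.le] using hcount

/-- The number of realizable permutations of `k` intervals of length at
least `1` contained in `[0, m]` is at least `k! · ∏ᵢ (bᵢ - aᵢ) / m^k`. -/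
theorem stmt14 (k : ℕ) (hk : 1 ≤ k) (m : ℝ) (hm : 1 ≤ m)
    (a b : Fin k → ℝ)
    (hsub : ∀ i, Set.Icc (a i) (b i) ⊆ Set.Icc (0 : ℝ) m)
    (hlen : ∀ i, 1 ≤ b i - a i) :
    (Nat.factorial k : ℝ) * (∏ i, (b i - a i)) / m ^ k ≤
      (({σ : Equiv.Perm (Fin k) | realizable k a b σ}.ncard : ℕ) : ℝ) :=
  stmt14_general k m (by linarith) a b (fun i => by linarith [hlen i]) hsub
end

section
/- Let F = (R₁,…,Rₙ) be a finite family of axis-aligned rectangles. Let Q be a finite set of points, all with pairwise distinct x-coordinates and pairwise distinct y-coordinates, such that no point of Q dominates another point of Q and no point of Q lies in IPF(F). Suppose each region of F is assigned at most one point of Q lying in the interior of that region, and for q ∈ Q let F_q denote the set of regions assigned to q. For a realization P ∼ F, define the relation ≺_P on {1,…,n} by a ≺_P b iff p_a and p_b both lie on the Pareto front of P and p_a lies strictly to the left of or strictly above p_b. Then the number of distinct relations ≺_P over all realizations P ∼ F is at least ∏_{q ∈ Q} |F_q|!. -/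
/-!
Place the point of a region assigned to `q` on a short antidiagonal segment just above and to the
right of `q`, and every unassigned point at its bottom-left corner. A bottom-left corner dominating
a point of `Q` would put that point into the inner Pareto front, so the points on the segments are
dominated by no corner. They do not dominate each other either as soon as the positions along the
segments are monotone in `q.1 - q.2` from one segment to another. Hence all of them lie on the
Pareto front, and the points within each segment may be arranged in an arbitrary order.
-/

section Orders

theorem exists_unitInterval_lt_iff_lt {ι α : Type*} [Countable ι] [LinearOrder α] (k : ι → α) :
    ∃ t : ι → unitInterval, ∀ i j, t i < t j ↔ k i < k j := by
  have : Countable (Set.range k) := (Set.countable_range k).to_subtype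
  obtain ⟨e⟩ := Order.embedding_from_countable_to_dense (Set.range k) unitInterval
  exact ⟨fun i => e ⟨k i, i, rfl⟩, fun i j => e.lt_iff_lt⟩

theorem equiv_eq_of_lt_iff_lt {α β : Type*} [LinearOrder β] [WellFoundedLT β] {e f : α ≃ β}
    (h : ∀ a b, e a < e b ↔ f a < f b) : e = f := by
  have hmono : StrictMono (e.symm.trans f) := fun x y hxy => by
    simpa [← h] using hxy
  have hid : ⇑(e.symm.trans f) = id :=
    (hmono.range_inj strictMono_id).1 ((e.symm.trans f).surjective.range_eq.trans Set.range_id.symm)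
  ext a
  simpa using (congrFun hid (e a)).symm

end Orders

section Fibers

theorem exists_eq_on_option_fibers {ι γ β : Type*} [Nonempty β] (f : ι → Option γ)
    (φ : ∀ q, {i // f i = some q} → β) :
    ∃ r : ι → β, ∀ q (a : {i // f i = some q}), r a = φ q a := by
  have hpt (i : ι) : ∃ y, ∀ q (h : f i = some q), y = φ q ⟨i, h⟩ := by
    by_cases! hi : ∃ q, f i = some q
    · obtain ⟨q, hq⟩ := hi
      refine ⟨φ q ⟨i, hq⟩, fun q' hq' => ?_⟩
      obtain rfl : q = q' := Option.some.inj (hq.symm.trans hq')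
      rfl
    · exact ⟨Classical.arbitrary β, fun q hq => absurd hq (hi q)⟩
  choose r hr using hpt
  exact ⟨r, fun q a => hr a q a.2⟩

theorem card_pi_perm {ι γ : Type*} [Finite ι] (Q : Finset γ) (S : γ → Set ι) :
    Nat.card (∀ q : Q, Equiv.Perm (S q)) = ∏ q ∈ Q, (S q).ncard.factorial := by
  simp only [Nat.card_pi, Nat.card_perm, Nat.card_coe_set_eq]
  exact Finset.prod_coe_sort Q fun q => (S q).ncard.factorial

end Fibers

section Domination

theorem dom_of_le_of_dom_of_le {p p' q q' : ℝ × ℝ} (hq : q ≤ q') (h : dom p q') (hp : p ≤ p') :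
    dom p' q :=
  ⟨hq.1.trans_lt (h.1.trans_le hp.1), hq.2.trans_lt (h.2.trans_le hp.2)⟩

theorem fst_le_and_snd_le_of_sub_le_sub {q q' : ℝ × ℝ} (hqq' : ¬ dom q q') (hq'q : ¬ dom q' q)
    (h : q.1 - q.2 ≤ q'.1 - q'.2) : q.1 ≤ q'.1 ∧ q'.2 ≤ q.2 := by
  constructor
  · by_contra! hlt
    exact hqq' ⟨hlt, by linarith⟩
  · by_contra! hlt
    exact hq'q ⟨by linarith, hlt⟩

theorem not_dom_add_antidiagonal {q q' : ℝ × ℝ} {ε s t : ℝ} (hε : 0 ≤ ε)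
    (hqq' : ¬ dom q q') (hq'q : ¬ dom q' q) (hst : s < t → q.1 - q.2 ≤ q'.1 - q'.2)
    (hts : t < s → q'.1 - q'.2 ≤ q.1 - q.2) :
    ¬ dom (q + ε • (s, 1 - s)) (q' + ε • (t, 1 - t)) := by
  rintro ⟨h₁, h₂⟩
  simp only [Prod.fst_add, Prod.snd_add, Prod.smul_mk, smul_eq_mul] at h₁ h₂
  rcases lt_trichotomy s t with hlt | rfl | hlt
  · have hq := (fst_le_and_snd_le_of_sub_le_sub hqq' hq'q (hst hlt)).1
    nlinarith
  · exact hqq' ⟨by linarith, by linarith⟩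
  · have hq := (fst_le_and_snd_le_of_sub_le_sub hq'q hqq' (hts hlt)).2
    nlinarith

theorem Rect.bl_mem_toSet (R : Rect) : R.bl ∈ R.toSet :=
  ⟨⟨le_rfl, R.hx⟩, ⟨le_rfl, R.hy⟩⟩

theorem Rect.bl_le {R : Rect} {p : ℝ × ℝ} (hp : p ∈ R.toSet) : R.bl ≤ p :=
  ⟨hp.1.1, hp.2.1⟩

theorem not_dom_bl_of_notMem_IPF {n : ℕ} {F : Fin n → Rect} {q : ℝ × ℝ} (hq : q ∉ IPF F)
    (i : Fin n) : ¬ dom (F i).bl q := fun h =>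
  hq fun _ hP => ⟨i, dom_of_le_of_dom_of_le le_rfl h (Rect.bl_le (hP i))⟩

end Domination

section Placement

variable {n : ℕ} {F : Fin n → Rect} {assign : Fin n → Option (ℝ × ℝ)} {ε : ℝ}
  {t : Fin n → unitInterval} {i j : Fin n} {q : ℝ × ℝ}

/-- The realization candidate that puts the point of a region assigned to `q` at position `t i` of
the antidiagonal segment from `q + (0, ε)` to `q + (ε, 0)`, and the point of an unassigned region at
the bottom-left corner. -/
def antidiagonalPlacement (F : Fin n → Rect) (assign : Fin n → Option (ℝ × ℝ)) (ε : ℝ)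
    (t : Fin n → unitInterval) (i : Fin n) : ℝ × ℝ :=
  (assign i).elim (F i).bl fun q => q + ε • ((t i : ℝ), 1 - (t i : ℝ))

theorem antidiagonalPlacement_of_eq_none (hi : assign i = none) :
    antidiagonalPlacement F assign ε t i = (F i).bl := by
  simp only [antidiagonalPlacement, hi, Option.elim_none]

theorem antidiagonalPlacement_of_eq_some (hi : assign i = some q) :
    antidiagonalPlacement F assign ε t i = q + ε • ((t i : ℝ), 1 - (t i : ℝ)) := by
  simp only [antidiagonalPlacement, hi, Option.elim_some]

theorem le_antidiagonalPlacement (hε : 0 ≤ ε) (hi : assign i = some q) :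
    q ≤ antidiagonalPlacement F assign ε t i := by
  rw [antidiagonalPlacement_of_eq_some hi]
  exact le_add_of_nonneg_right
    ⟨mul_nonneg hε (t i).2.1, mul_nonneg hε (sub_nonneg.2 (t i).2.2)⟩

open Topology in
theorem eventually_isRealization_antidiagonalPlacement
    (hint : ∀ i q, assign i = some q → q ∈ interior (F i).toSet) (t : Fin n → unitInterval) :
    ∀ᶠ ε in 𝓝 0, IsRealization F (antidiagonalPlacement F assign ε t) := by
  refine Filter.eventually_all.2 fun i => ?_
  rcases hi : assign i with _ | q
  · simp only [antidiagonalPlacement_of_eq_none hi, Rect.bl_mem_toSet, Filter.eventually_true]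
  · simp only [antidiagonalPlacement_of_eq_some hi]
    have hcont : Continuous fun ε : ℝ => q + ε • ((t i : ℝ), 1 - (t i : ℝ)) := by fun_prop
    exact hcont.tendsto' 0 q (by simp) (mem_interior_iff_mem_nhds.1 (hint i q hi))

theorem not_dom_antidiagonalPlacement
    (hnd : ∀ i j q q', assign i = some q → assign j = some q' → ¬ dom q q')
    (hIPF : ∀ i q, assign i = some q → q ∉ IPF F)
    (ht : ∀ i j q q', assign i = some q → assign j = some q' → t i < t j →
      q.1 - q.2 ≤ q'.1 - q'.2)
    (hε : 0 ≤ ε) (hi : assign i = some q) (c : Fin n) :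
    ¬ dom (antidiagonalPlacement F assign ε t c) (antidiagonalPlacement F assign ε t i) := by
  rcases hc : assign c with _ | q'
  · rw [antidiagonalPlacement_of_eq_none hc]
    exact fun h => not_dom_bl_of_notMem_IPF (hIPF i q hi) c
      (dom_of_le_of_dom_of_le (le_antidiagonalPlacement hε hi) h le_rfl)
  · rw [antidiagonalPlacement_of_eq_some hc, antidiagonalPlacement_of_eq_some hi]
    exact not_dom_add_antidiagonal hε (hnd c i q' q hc hi) (hnd i c q q' hi hc)
      (ht c i q' q hc hi) (ht i c q q' hi hc)

theorem precRel_antidiagonalPlacement_iff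
    (hnd : ∀ i j q q', assign i = some q → assign j = some q' → ¬ dom q q')
    (hIPF : ∀ i q, assign i = some q → q ∉ IPF F)
    (ht : ∀ i j q q', assign i = some q → assign j = some q' → t i < t j →
      q.1 - q.2 ≤ q'.1 - q'.2)
    (hε : 0 < ε) (hi : assign i = some q) (hj : assign j = some q) :
    precRel (antidiagonalPlacement F assign ε t) i j ↔ t i < t j := by
  have hfront {k : Fin n} (hk : assign k = some q) (c : Fin n) (_ : c ≠ k) :=
    not_dom_antidiagonalPlacement hnd hIPF ht hε.le hk c
  set P := antidiagonalPlacement F assign ε t with hP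
  have horder : (P i).1 < (P j).1 ∨ (P j).2 < (P i).2 ↔ t i < t j := by
    simp [hP, antidiagonalPlacement_of_eq_some hi, antidiagonalPlacement_of_eq_some hj, hε]
  exact ⟨fun h => horder.1 h.2.2, fun h => ⟨hfront hi, hfront hj, horder.2 h⟩⟩

theorem exists_isRealization_precRel_iff {α : Type*} [LinearOrder α]
    (hnd : ∀ i j q q', assign i = some q → assign j = some q' → ¬ dom q q')
    (hIPF : ∀ i q, assign i = some q → q ∉ IPF F)
    (hint : ∀ i q, assign i = some q → q ∈ interior (F i).toSet) (r : Fin n → α) :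
    ∃ P, IsRealization F P ∧
      ∀ i j q, assign i = some q → assign j = some q → (precRel P i j ↔ r i < r j) := by
  let diag (i : Fin n) : ℝ := (assign i).elim 0 fun q => q.1 - q.2
  have hdiag {i q} (hi : assign i = some q) : diag i = q.1 - q.2 := by
    simp only [diag, hi, Option.elim_some]
  obtain ⟨t, ht⟩ := exists_unitInterval_lt_iff_lt fun i => toLex (diag i, r i)
  simp only [Prod.Lex.toLex_lt_toLex] at ht
  have hmono : ∀ i j q q', assign i = some q → assign j = some q' → t i < t j →
      q.1 - q.2 ≤ q'.1 - q'.2 := fun i j q q' hi hj hlt => by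
    rw [← hdiag hi, ← hdiag hj]
    exact ((ht i j).1 hlt).elim le_of_lt fun h => h.1.le
  obtain ⟨ε, hε, hP⟩ := (eventually_isRealization_antidiagonalPlacement hint t).exists_gt
  refine ⟨_, hP, fun i j q hi hj => ?_⟩
  rw [precRel_antidiagonalPlacement_iff hnd hIPF hmono hε hi hj, ht, hdiag hi, hdiag hj]
  simp only [lt_irrefl, false_or, true_and]

end Placement

theorem stmt18_general {n : ℕ} (F : Fin n → Rect) (Q : Finset (ℝ × ℝ))
    (hnd : ∀ q ∈ Q, ∀ q' ∈ Q, q ≠ q' → ¬ dom q q')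
    (hIPF : ∀ q ∈ Q, q ∉ IPF F)
    (assign : Fin n → Option (ℝ × ℝ))
    (hassign : ∀ i q, assign i = some q → q ∈ Q ∧ q ∈ interior (F i).toSet) :
    ∏ q ∈ Q, Nat.factorial ({i : Fin n | assign i = some q}.ncard) ≤
      {r : Fin n → Fin n → Prop |
        ∃ P : Fin n → ℝ × ℝ, IsRealization F P ∧ r = precRel P}.ncard := by
  have hQ {i q} (hi : assign i = some q) : q ∈ Q := (hassign i q hi).1
  have hnd' : ∀ i j q q', assign i = some q → assign j = some q' → ¬ dom q q' :=
    fun i j q q' hi hj h => hnd q (hQ hi) q' (hQ hj) (fun e => (e ▸ h.1).false) h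
  have hrealize (σ : ∀ q : Q, Equiv.Perm {i | assign i = some q.1}) :
      ∃ P, IsRealization F P ∧ ∀ q a b, precRel P a.1 b.1 ↔ σ q a < σ q b := by
    obtain ⟨r, hr⟩ := exists_eq_on_option_fibers assign fun q a =>
      ((σ ⟨q, hQ a.2⟩ a : Fin n) : ℕ)
    obtain ⟨P, hP, hrel⟩ := exists_isRealization_precRel_iff hnd'
      (fun i q hi => hIPF q (hQ hi)) (fun i q hi => (hassign i q hi).2) r
    refine ⟨P, hP, fun q a b => ?_⟩
    rw [hrel a b q a.2 b.2, hr q a, hr q b, Fin.val_fin_lt, Subtype.coe_lt_coe]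
  choose P hP hrel using hrealize
  have hinj : Function.Injective fun σ => precRel (P σ) := fun σ τ h => funext fun q =>
    equiv_eq_of_lt_iff_lt fun a b => by
      rw [← hrel, ← hrel, show precRel (P σ) = precRel (P τ) from h]
  rw [← card_pi_perm Q fun q => {i | assign i = some q}, ← Nat.card_range_of_injective hinj,
    Nat.card_coe_set_eq]
  exact Set.ncard_le_ncard (Set.range_subset_iff.2 fun σ => ⟨P σ, hP σ, rfl⟩)

/-- lower-bound tool. Given a set `Q` of pairwise non-dominating points
with distinct coordinates, none in `IPF F`, and an assignment of at most one point of
`Q` (interior to the region) to each region, the number of distinct Pareto-front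
relations `≺_P` over all realizations `P ∼ F` is at least `∏_{q ∈ Q} |F_q|!`. -/
theorem stmt18 {n : ℕ} (F : Fin n → Rect) (Q : Finset (ℝ × ℝ))
    (hcoord : ∀ q ∈ Q, ∀ q' ∈ Q, q ≠ q' → q.1 ≠ q'.1 ∧ q.2 ≠ q'.2)
    (hnd : ∀ q ∈ Q, ∀ q' ∈ Q, q ≠ q' → ¬ dom q q')
    (hIPF : ∀ q ∈ Q, q ∉ IPF F)
    (assign : Fin n → Option (ℝ × ℝ))
    (hassign : ∀ i q, assign i = some q → q ∈ Q ∧ q ∈ interior (F i).toSet) :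
    ∏ q ∈ Q, Nat.factorial ({i : Fin n | assign i = some q}.ncard) ≤
      {r : Fin n → Fin n → Prop |
        ∃ P : Fin n → ℝ × ℝ, IsRealization F P ∧ r = precRel P}.ncard :=
  stmt18_general F Q hnd hIPF assign hassign
end
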